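/- arXiv:0902.4270 — 5 statements merged into one kernel-verified Lean document; each statement's English description precedes it below -/
import Mathlib

section
/- If char(F) = 0 or char(F) > 3, then any product of six words y_1 y_2 y_3 y_4 y_5 y_6 with y_1,…,y_6 ∈ M is equal to zero in A_{3,d}; in particular every word of length at least 6 is zero in A_{3,d}. -/
open FreeAlgebra MulOpposite

/-- The alphabet: `(k, false)` is the letter `x_{k+1}`, `(k, true)` is `x_{k+1}ᵀ`. -/
abbrev Ltr (d : ℕ) := Fin d × Bool

/-- The free (unital) associative algebra on the `2d` letters.  The free non-unital
algebra `M_F` sits inside it as the span of the nonempty words. -/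
abbrev FA (F : Type) [Field F] (d : ℕ) := FreeAlgebra F (Ltr d)

variable (F : Type) [Field F] (d : ℕ)

/-- The word in the free algebra corresponding to a list of letters
(the empty list gives `1`, the unit). -/
def wordOf (l : List (Ltr d)) : FA F d := (l.map (FreeAlgebra.ι F)).prod

/-- The transpose: the linear anti-automorphism with `x ↦ xᵀ`, `xᵀ ↦ x`. -/
def tp (a : FA F d) : FA F d :=
  ((FreeAlgebra.lift F fun p : Ltr d => op (FreeAlgebra.ι F (p.1, !p.2))) a).unop

/-- `ā = a - aᵀ`. -/
def bar (a : FA F d) : FA F d := a - tp F d a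

/-- `T(a,b,c) = a b̄ c̄ + b̄ aᵀ c̄ + b̄ c̄ a`. -/
def Trel (a b c : FA F d) : FA F d :=
  a * bar F d b * bar F d c + bar F d b * tp F d a * bar F d c + bar F d b * bar F d c * a

/-- The copy of the free non-unital algebra `M_F`, i.e. the span of the nonempty words. -/
def MFsub : Submodule F (FA F d) :=
  Submodule.span F {w | ∃ l : List (Ltr d), l ≠ [] ∧ w = wordOf F d l}

/-- The two-sided ideal such that `A_{3,d} = M_F / (idealA ∩ M_F)`: it is generated by
`a³` for `a ∈ M_F` together with `T(a,b,c)` for `a, b, c ∈ M_F`.  (Since all generators lie in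
`M_F`, its intersection with `M_F` is exactly the two-sided ideal of the non-unital algebra
`M_F` generated by these elements; in fact it is contained in `M_F`.)
An element `u ∈ M_F` is zero in `A_{3,d}` iff `u ∈ idealA F d`. -/
def idealA : TwoSidedIdeal (FA F d) :=
  TwoSidedIdeal.span
    ({x | ∃ a ∈ MFsub F d, x = a ^ 3} ∪
     {x | ∃ a ∈ MFsub F d, ∃ b ∈ MFsub F d, ∃ c ∈ MFsub F d, x = Trel F d a b c})

section nil3
variable {A : Type*} [NonUnitalRing A]

lemma nil3_P (h : ∀ a : A, a * a * a = 0) (h2 : ∀ a : A, a + a = 0 → a = 0) (x y : A) :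
    x * x * y + x * y * x + y * x * x = 0 := by
  apply h2
  have e1 := h (x + y)
  have e2 := h (x - y)
  have e3 := h y
  have : (x + y) * (x + y) * (x + y) - (x - y) * (x - y) * (x - y) - (y * y * y + y * y * y) = 0 := by
    rw [e1, e2, e3]; simp
  rw [← this]
  simp only [mul_add, add_mul, mul_sub, sub_mul]
  abel

lemma nil3_S (h : ∀ a : A, a * a * a = 0) (h2 : ∀ a : A, a + a = 0 → a = 0) (x y z : A) :
    x * y * z + x * z * y + y * x * z + y * z * x + z * x * y + z * y * x = 0 := by
  have e1 := nil3_P h h2 (x + y) z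
  have e2 := nil3_P h h2 x z
  have e3 := nil3_P h h2 y z
  have : ((x + y) * (x + y) * z + (x + y) * z * (x + y) + z * (x + y) * (x + y))
    - (x * x * z + x * z * x + z * x * x) - (y * y * z + y * z * y + z * y * y) = 0 := by
    rw [e1, e2, e3]; simp
  rw [← this]
  simp only [mul_add, add_mul]
  abel

lemma nil3_H (h : ∀ a : A, a * a * a = 0) (h2 : ∀ a : A, a + a = 0 → a = 0)
    (h3 : ∀ a : A, a + a + a = 0 → a = 0) (x z y : A) :
    x * x * z * (y * y) = 0 := by
  apply h3
  have P := nil3_P h h2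
  have p0 := congrArg (· * (y * y)) (P x z)
  have p1 := congrArg (· * y) (P x (z * y))
  have p2 := P x (z * (y * y))
  have q1 := congrArg (x * z * ·) (P y x)
  have q2 := congrArg (z * ·) (P y (x * x))
  simp only [mul_add, add_mul, mul_zero, zero_mul, ← mul_assoc] at *
  grind

lemma nil3_L (h : ∀ a : A, a * a * a = 0) (h2 : ∀ a : A, a + a = 0 → a = 0)
    (h3 : ∀ a : A, a + a + a = 0 → a = 0) (x a b c d : A) :
    x * x * a * b * c * d = 0 := by
  have H := nil3_H h h2 h3
  have K : ∀ y z w : A, x * x * y * (z * w) + x * x * y * (w * z) = 0 := by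
    intro y z w
    have e1 := H x y (z + w)
    have e2 := H x y z
    have e3 := H x y w
    have : x * x * y * ((z + w) * (z + w)) - x * x * y * (z * z) - x * x * y * (w * w) = 0 := by
      rw [e1, e2, e3]; simp
    rw [← this]
    simp only [mul_add, add_mul]
    abel
  apply h2
  have k1 := K a (b * c) d
  have k2 := congrArg (· * c) (K a b d)
  have k3 := K (a * b) c d
  simp only [mul_add, add_mul, mul_zero, zero_mul, ← mul_assoc] at *
  grind

lemma nil3_R (h : ∀ a : A, a * a * a = 0) (h2 : ∀ a : A, a + a = 0 → a = 0)
    (h3 : ∀ a : A, a + a + a = 0 → a = 0) (x a b c d : A) :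
    a * b * c * d * x * x = 0 := by
  have := nil3_L (A := Aᵐᵒᵖ)
    (fun a => by
      apply MulOpposite.unop_injective
      simpa [mul_assoc] using h a.unop)
    (fun a ha => by
      apply MulOpposite.unop_injective
      exact h2 _ (by simpa using congrArg MulOpposite.unop ha))
    (fun a ha => by
      apply MulOpposite.unop_injective
      exact h3 _ (by simpa using congrArg MulOpposite.unop ha))
    (op x) (op d) (op c) (op b) (op a)
  have := congrArg MulOpposite.unop this
  simpa [mul_assoc] using this

lemma lin2 (f : A → A → A) (hf : ∀ x, f x x = 0)
    (hl : ∀ x y z, f (x + y) z = f x z + f y z) (hr : ∀ x y z, f x (y + z) = f x y + f x z)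
    (x y : A) : f x y = - f y x := by
  have := hf (x + y)
  rw [hl, hr, hr, hf, hf, zero_add, add_zero] at this
  exact eq_neg_of_add_eq_zero_left this

lemma nil3_main (h : ∀ a : A, a * a * a = 0) (h2 : ∀ a : A, a + a = 0 → a = 0)
    (h3 : ∀ a : A, a + a + a = 0 → a = 0) (a b c d e f : A) :
    a * b * c * d * e * f = 0 := by
  have L := nil3_L h h2 h3
  have R := nil3_R h h2 h3
  have S := nil3_S h h2
  have P := nil3_P h h2
  have L' : ∀ a b c d e f : A, a * b * c * d * e * f = - (b * a * c * d * e * f) := fun a b c d e f =>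
    lin2 (fun a b => a * b * c * d * e * f) (fun x => L x c d e f)
      (by intros; simp only [add_mul]) (by intros; simp only [mul_add, add_mul]) a b
  have R' : ∀ a b c d e f : A, a * b * c * d * e * f = - (a * b * c * d * f * e) := fun a b c d e f =>
    lin2 (fun e f => a * b * c * d * e * f) (fun x => R x a b c d)
      (by intros; simp only [add_mul, mul_add]) (by intros; simp only [mul_add]) e f
  -- d e f x x z = 0
  have M2 : ∀ d e f x z : A, d * e * f * x * x * z = 0 := by
    intro d e f x z
    have s1 := S (d * e * f * x) x z
    have s2 := congrArg (· * z) (P x (d * e * f))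
    have r1 := R' d e f x x z
    have r2 := L' x z d e f x
    have r3 := R x z d e f
    have r4 := L x d e f z
    simp only [mul_add, add_mul, mul_zero, zero_mul, ← mul_assoc] at *
    grind
  have M1 : ∀ z x d e f : A, z * x * x * d * e * f = 0 := by
    intro z x d e f
    have s1 := S (d * e * f) (x * x) z
    have r1 := M2 d e f x z
    have r2 := L x z d e f
    have r3 := R x z d e f
    have r4 := L x d e f z
    have r5 := R x d e f z
    simp only [← mul_assoc] at *
    grind
  have M1' : ∀ a b c d e f : A, a * b * c * d * e * f = - (a * c * b * d * e * f) := fun a b c d e f =>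
    lin2 (fun b c => a * b * c * d * e * f) (fun x => M1 a x d e f)
      (by intros; simp only [add_mul, mul_add]) (by intros; simp only [mul_add, add_mul]) b c
  have M2' : ∀ a b c d e f : A, a * b * c * d * e * f = - (a * b * c * e * d * f) := fun a b c d e f =>
    lin2 (fun d e => a * b * c * d * e * f) (fun x => M2 a b c x f)
      (by intros; simp only [add_mul, mul_add]) (by intros; simp only [mul_add, add_mul]) d e
  have M3 : ∀ a b c d e f : A, a * b * c * d * e * f = - (a * b * d * c * e * f) := by
    intro a b c d e f
    have s := congrArg (· * e * f) (S (a * b) c d)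
    simp only [add_mul, zero_mul, ← mul_assoc] at s
    have q1 := M1' a c b d e f
    have q2 := L' c a b d e f
    have q3 := M1' a d b c e f
    have q4 := L' d a b c e f
    have q5 := L' c d a b e f
    apply eq_neg_of_add_eq_zero_left
    apply h2
    grind
  -- swapping adjacent blocks of two
  have B1 : ∀ a b c d e f : A, a * b * c * d * e * f = c * d * a * b * e * f := by
    intro a b c d e f
    rw [M1' a b c d, L' a c b d, M3 c a b d, M1' c a d b]; simp
  have B2 : ∀ a b c d e f : A, a * b * c * d * e * f = a * b * e * f * c * d := by
    intro a b c d e f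
    rw [M2' a b c d e f, M3 a b c e d f, R' a b e c d f, M2' a b e c f d]; simp
  have s := S (a * b) (c * d) (e * f)
  simp only [← mul_assoc] at s
  have t1 := B2 a b c d e f
  have t2 := B1 a b c d e f
  have t3 := B2 c d a b e f
  have t4 := B1 a b e f c d
  have t5 := B2 e f a b c d
  apply h3
  apply h2
  grind

end nil3

lemma wordOf_append (F : Type) [Field F] (d : ℕ) (l m : List (Ltr d)) :
    wordOf F d (l ++ m) = wordOf F d l * wordOf F d m := by
  simp [wordOf]

lemma MFsub_mul (F : Type) [Field F] (d : ℕ) (a b : FA F d) (ha : a ∈ MFsub F d)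
    (hb : b ∈ MFsub F d) : a * b ∈ MFsub F d := by
  have : a * b ∈ MFsub F d * MFsub F d := Submodule.mul_mem_mul ha hb
  refine (?_ : MFsub F d * MFsub F d ≤ MFsub F d) this
  unfold MFsub
  rw [Submodule.span_mul_span]
  apply Submodule.span_mono
  rintro _ ⟨_, ⟨l, hl, rfl⟩, _, ⟨m, hm, rfl⟩, rfl⟩
  exact ⟨l ++ m, by simp [hl], (wordOf_append F d l m).symm⟩

lemma prod6_mem (F : Type) [Field F] (d : ℕ)
    (hch : ringChar F = 0 ∨ 3 < ringChar F) (y : Fin 6 → FA F d) (hy : ∀ i, y i ∈ MFsub F d) :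
    y 0 * y 1 * y 2 * y 3 * y 4 * y 5 ∈ idealA F d := by
  have n2 : (2 : F) ≠ 0 := by
    intro h0
    have := (ringChar.spec F 2).1 (by exact_mod_cast h0)
    rcases hch with h | h
    · rw [h] at this; omega
    · have := Nat.le_of_dvd (by norm_num) this; omega
  have n3 : (3 : F) ≠ 0 := by
    intro h0
    have := (ringChar.spec F 3).1 (by exact_mod_cast h0)
    rcases hch with h | h
    · rw [h] at this; omega
    · have := Nat.le_of_dvd (by norm_num) this; omega
  let Q := (idealA F d).ringCon.Quotient
  let π : FA F d →+* Q := (idealA F d).ringCon.mk'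
  have hπ : ∀ x, π x = 0 ↔ x ∈ idealA F d := by
    intro x
    rw [TwoSidedIdeal.mem_iff]
    exact (idealA F d).ringCon.eq
  have hker : ∀ (k : F), k ≠ 0 → ∀ x, algebraMap F (FA F d) k * x ∈ idealA F d → x ∈ idealA F d := by
    intro k hk x hx
    have := (idealA F d).mul_mem_left (algebraMap F (FA F d) k⁻¹) _ hx
    rwa [← mul_assoc, ← map_mul, inv_mul_cancel₀ hk, map_one, one_mul] at this
  let S : NonUnitalSubring Q :=
    { carrier := {q | ∃ a ∈ MFsub F d, π a = q}
      add_mem' := by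
        rintro _ _ ⟨a, ha, rfl⟩ ⟨b, hb, rfl⟩
        exact ⟨a + b, add_mem ha hb, map_add π a b⟩
      zero_mem' := ⟨0, zero_mem _, map_zero π⟩
      neg_mem' := by
        rintro _ ⟨a, ha, rfl⟩
        exact ⟨-a, neg_mem ha, map_neg π a⟩
      mul_mem' := by
        rintro _ _ ⟨a, ha, rfl⟩ ⟨b, hb, rfl⟩
        exact ⟨a * b, MFsub_mul F d a b ha hb, map_mul π a b⟩ }
  have main := nil3_main (A := S)
    (by
      rintro ⟨_, a, ha, rfl⟩
      apply Subtype.ext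
      change π a * π a * π a = 0
      rw [← map_mul, ← map_mul, hπ]
      apply TwoSidedIdeal.subset_span
      exact Or.inl ⟨a, ha, by rw [pow_succ, pow_two]⟩)
    (by
      rintro ⟨_, a, ha, rfl⟩ h
      apply Subtype.ext
      have h := congrArg Subtype.val h
      change π a + π a = 0 at h
      change π a = 0
      rw [← map_add, hπ] at h
      rw [hπ]
      apply hker 2 n2
      rwa [map_ofNat, two_mul])
    (by
      rintro ⟨_, a, ha, rfl⟩ h
      apply Subtype.ext
      have h := congrArg Subtype.val h
      change π a + π a + π a = 0 at h
      change π a = 0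
      rw [← map_add, ← map_add, hπ] at h
      rw [hπ]
      apply hker 3 n3
      rw [map_ofNat]
      convert h using 1
      noncomm_ring)
    ⟨π (y 0), y 0, hy 0, rfl⟩ ⟨π (y 1), y 1, hy 1, rfl⟩ ⟨π (y 2), y 2, hy 2, rfl⟩
    ⟨π (y 3), y 3, hy 3, rfl⟩ ⟨π (y 4), y 4, hy 4, rfl⟩ ⟨π (y 5), y 5, hy 5, rfl⟩
  have main := congrArg Subtype.val main
  change π (y 0) * π (y 1) * π (y 2) * π (y 3) * π (y 4) * π (y 5) = 0 at main
  rw [← hπ]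
  simpa only [map_mul] using main

/-- if `char F = 0` or `char F > 3`, then any product of six words is zero in
`A_{3,d}`; in particular every word of length at least `6` is zero in `A_{3,d}`. -/
theorem stmt4 (F : Type) [Field F] [Infinite F] (d : ℕ)
    (hch : ringChar F = 0 ∨ 3 < ringChar F) :
    (∀ y : Fin 6 → List (Ltr d), (∀ i, y i ≠ []) →
      (List.ofFn fun i => wordOf F d (y i)).prod ∈ idealA F d) ∧
    (∀ l : List (Ltr d), 6 ≤ l.length → wordOf F d l ∈ idealA F d) := by
  have key : ∀ y : Fin 6 → List (Ltr d), (∀ i, y i ≠ []) →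
      (List.ofFn fun i => wordOf F d (y i)).prod ∈ idealA F d := by
    intro y hy
    have := prod6_mem F d hch (fun i => wordOf F d (y i))
      (fun i => Submodule.subset_span ⟨y i, hy i, rfl⟩)
    simpa [List.ofFn_succ, mul_assoc, Fin.succ] using this
  refine ⟨key, ?_⟩
  intro l hl
  match l, hl with
  | a :: b :: c :: p :: q :: r :: t, _ =>
    have := key ![[a], [b], [c], [p], [q], r :: t] (by intro i; fin_cases i <;> simp)
    simpa [List.ofFn_succ, wordOf] using this
end

section
/- For all words a, b ∈ M one has (ab)² = b²a² in A_{3,d}; more generally, for all words a_1, …, a_s ∈ M one has (a_1 a_2 ⋯ a_s)² = a_s² ⋯ a_2² a_1² in A_{3,d}. -/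
open FreeAlgebra MulOpposite

variable (F : Type) [Field F] (d : ℕ)

theorem aux_word_mem (l : List (Ltr d)) (hl : l ≠ []) : wordOf F d l ∈ MFsub F d :=
  Submodule.subset_span ⟨l, hl, rfl⟩

theorem aux_word_append (l m : List (Ltr d)) :
    wordOf F d (l ++ m) = wordOf F d l * wordOf F d m := by
  simp [wordOf]

theorem aux_cube (a : FA F d) (ha : a ∈ MFsub F d) : a ^ 3 ∈ idealA F d :=
  TwoSidedIdeal.subset_span (Or.inl ⟨a, ha, rfl⟩)

theorem aux_P (h2 : ringChar F ≠ 2) (a b : FA F d) (ha : a ∈ MFsub F d) (hb : b ∈ MFsub F d) :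
    a * a * b + a * b * a + b * a * a ∈ idealA F d := by
  have h1 := aux_cube F d _ (Submodule.add_mem _ hb ha)
  have h3 := aux_cube F d _ (Submodule.sub_mem _ hb ha)
  have h4 := aux_cube F d _ hb
  have h5 := (idealA F d).sub_mem ((idealA F d).add_mem h1 h3) ((idealA F d).add_mem h4 h4)
  have h6 := (idealA F d).mul_mem_left (algebraMap F (FA F d) (2⁻¹)) _ h5
  have h20 : (2 : F) ≠ 0 := Ring.two_ne_zero h2
  have key : (b + a) ^ 3 + (b - a) ^ 3 - (b ^ 3 + b ^ 3)
      = (2 : F) • (a * a * b + a * b * a + b * a * a) := by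
    rw [two_smul]
    noncomm_ring
  rw [key, ← Algebra.smul_def, smul_smul, inv_mul_cancel₀ h20, one_smul] at h6
  exact h6

theorem aux_two (h2 : ringChar F ≠ 2) (a b : List (Ltr d)) (ha : a ≠ []) (hb : b ≠ []) :
    (wordOf F d a * wordOf F d b) ^ 2 - wordOf F d b ^ 2 * wordOf F d a ^ 2 ∈ idealA F d := by
  have hA := aux_word_mem F d a ha
  have hB := aux_word_mem F d b hb
  have hAA : wordOf F d a * wordOf F d a ∈ MFsub F d := by
    rw [← aux_word_append]
    exact aux_word_mem F d _ (by simp [ha])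
  have e1 := (idealA F d).mul_mem_right _ (wordOf F d b) (aux_P F d h2 _ _ hA hB)
  have e2 := aux_P F d h2 _ _ hB hAA
  have e3 := (idealA F d).sub_mem e1 e2
  convert e3 using 1
  noncomm_ring

theorem aux_join (L : List (List (Ltr d))) :
    (L.map (wordOf F d)).prod = wordOf F d L.flatten := by
  induction L with
  | nil => simp [wordOf]
  | cons l L ih => rw [List.map_cons, List.prod_cons, ih, List.flatten_cons, aux_word_append]

theorem aux_many (h2 : ringChar F ≠ 2) (L : List (List (Ltr d))) (hL : ∀ l ∈ L, l ≠ []) :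
    (L.map (wordOf F d)).prod ^ 2 - (L.reverse.map fun l => wordOf F d l ^ 2).prod
        ∈ idealA F d := by
  induction L with
  | nil => simpa using (idealA F d).zero_mem
  | cons l L ih =>
    have ih' := ih fun m hm => hL m (List.mem_cons_of_mem _ hm)
    by_cases h : L = []
    · subst h
      simpa using (idealA F d).zero_mem
    · have hne : L.flatten ≠ [] := by
        obtain ⟨m, M, rfl⟩ := List.exists_cons_of_ne_nil h
        have := hL m (by simp)
        simp [this]
      have e1 := aux_two F d h2 l L.flatten (hL l (by simp)) hne
      have e2 := (idealA F d).mul_mem_right _ (wordOf F d l ^ 2) ih'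
      rw [← aux_join] at e1
      have e3 := (idealA F d).add_mem e1 e2
      rw [List.map_cons, List.prod_cons, List.reverse_cons, List.map_append, List.prod_append,
        List.map_singleton, List.prod_singleton]
      convert e3 using 1
      rw [sub_mul]
      abel

/-- `(ab)² = b²a²` in `A_{3,d}` for all words `a, b`; more generally
`(a₁ ⋯ a_s)² = a_s² ⋯ a₁²` in `A_{3,d}` for all words `a₁, …, a_s`. -/
theorem stmt5 (F : Type) [Field F] [Infinite F] (h2 : ringChar F ≠ 2) (d : ℕ) :
    (∀ a b : List (Ltr d), a ≠ [] → b ≠ [] →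
      (wordOf F d a * wordOf F d b) ^ 2 - wordOf F d b ^ 2 * wordOf F d a ^ 2 ∈ idealA F d) ∧
    (∀ L : List (List (Ltr d)), L ≠ [] → (∀ l ∈ L, l ≠ []) →
      (L.map (wordOf F d)).prod ^ 2 - (L.reverse.map fun l => wordOf F d l ^ 2).prod
        ∈ idealA F d) := by
  exact ⟨fun a b ha hb => aux_two F d h2 a b ha hb, fun L _ hL => aux_many F d h2 L hL⟩
end

section
/- For all words a, b, c ∈ M one has ā b̄ c̄ = − c̄ b̄ ā in A_{3,d}, where ā = a − a^T. -/
open FreeAlgebra MulOpposite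

variable (F : Type) [Field F] (d : ℕ)

theorem tp_word (F : Type) [Field F] (d : ℕ) (l : List (Ltr d)) :
    tp F d (wordOf F d l) = wordOf F d ((l.map fun p => (p.1, !p.2)).reverse) := by
  induction l with
  | nil => simp [tp, wordOf]
  | cons p l ih =>
    simp only [tp, wordOf] at ih
    simp [tp, wordOf, ih]

theorem tp_sub' (F : Type) [Field F] (d : ℕ) (a b : FA F d) :
    tp F d (a - b) = tp F d a - tp F d b := by
  simp [tp]

theorem tp_bar_word (F : Type) [Field F] (d : ℕ) (l : List (Ltr d)) :
    tp F d (bar F d (wordOf F d l)) = - bar F d (wordOf F d l) := by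
  rw [bar, tp_sub', tp_word, tp_word]
  simp [List.map_reverse, Function.comp_def]

theorem word_mem (F : Type) [Field F] (d : ℕ) (l : List (Ltr d)) (hl : l ≠ []) :
    wordOf F d l ∈ MFsub F d := Submodule.subset_span ⟨l, hl, rfl⟩

theorem bar_mem (F : Type) [Field F] (d : ℕ) (l : List (Ltr d)) (hl : l ≠ []) :
    bar F d (wordOf F d l) ∈ MFsub F d := by
  rw [bar, tp_word]
  exact Submodule.sub_mem _ (word_mem F d l hl) (word_mem F d _ (by simpa using hl))

/-- `ā b̄ c̄ = − c̄ b̄ ā` in `A_{3,d}` for all words `a, b, c`. -/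
theorem stmt8 (F : Type) [Field F] [Infinite F] (h2 : ringChar F ≠ 2) (d : ℕ)
    (a b c : List (Ltr d)) (ha : a ≠ []) (hb : b ≠ []) (hc : c ≠ []) :
    bar F d (wordOf F d a) * bar F d (wordOf F d b) * bar F d (wordOf F d c) +
      bar F d (wordOf F d c) * bar F d (wordOf F d b) * bar F d (wordOf F d a)
      ∈ idealA F d := by
  have key : ∀ u v w : List (Ltr d), u ≠ [] → v ≠ [] → w ≠ [] →
      Trel F d (bar F d (wordOf F d u)) (wordOf F d v) (wordOf F d w) ∈ idealA F d :=
    fun u v w hu hv hw => TwoSidedIdeal.subset_span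
      (Or.inr ⟨_, bar_mem F d u hu, _, word_mem F d v hv, _, word_mem F d w hw, rfl⟩)
  have h := (idealA F d).add_mem (key a b c ha hb hc) (key c b a hc hb ha)
  simp only [Trel, tp_bar_word] at h
  convert h using 1
  noncomm_ring
end

section
/- Assume char(F) = 3 and fix 1 ≤ i ≤ d. Let e ∈ M_F be a multihomogeneous element of multidegree (δ_1,…,δ_d) with δ_i < 3 and δ_1 + ⋯ + δ_{i−1} + δ_{i+1} + ⋯ + δ_d > 0, and let π_i(e) ∈ M_F be the result of substituting x_i → 1 and x_i^T → 1 in e (1 being the empty word). If e = 0 in A_{3,d}, then π_i(e) = 0 in A_{3,d}. -/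
open FreeAlgebra MulOpposite

variable (F : Type) [Field F] (d : ℕ)

/-- The substitution `x_i ↦ 1`, `x_iᵀ ↦ 1`, all other letters fixed. -/
noncomputable def piMap (i : Fin d) : FA F d →ₐ[F] FA F d :=
  FreeAlgebra.lift F fun p : Ltr d => if p.1 = i then 1 else FreeAlgebra.ι F p


section helpers
open Polynomial

variable {F d}

theorem tp_add (a b : FA F d) : tp F d (a + b) = tp F d a + tp F d b := by simp [tp]

theorem tp_sum {α : Type*} (s : Finset α) (f : α → FA F d) :
    tp F d (∑ x ∈ s, f x) = ∑ x ∈ s, tp F d (f x) := by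
  simp [tp]

theorem tp_mul (a b : FA F d) : tp F d (a * b) = tp F d b * tp F d a := by simp [tp]

theorem tp_algebraMap (c : F) : tp F d (algebraMap F _ c) = algebraMap F _ c := by
  simp only [tp, AlgHom.commutes]; rfl

theorem tp_ι (p : Ltr d) : tp F d (ι F p) = ι F (p.1, !p.2) := by simp [tp]

/-- The substitution `x_i, x_iᵀ ↦ X`. -/
noncomputable def Phi (i : Fin d) : FA F d →ₐ[F] (FA F d)[X] :=
  FreeAlgebra.lift F fun p : Ltr d => if p.1 = i then X else C (ι F p)

theorem Phi_ι (i : Fin d) (p : Ltr d) :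
    Phi i (ι F p) = if p.1 = i then X else C (ι F p) := by simp [Phi]

theorem Phi_tp (i : Fin d) (a : FA F d) (n : ℕ) :
    (Phi i (tp F d a)).coeff n = tp F d ((Phi i a).coeff n) := by
  have tp0 : tp F d 0 = 0 := by simp [tp]
  have tp1 : tp F d 1 = 1 := by simp [tp]
  induction a using FreeAlgebra.induction generalizing n with
  | grade0 r =>
    rw [tp_algebraMap, AlgHom.commutes, Polynomial.algebraMap_apply, coeff_C]
    split_ifs
    · rw [tp_algebraMap]
    · rw [tp0]
  | grade1 p =>
    rw [tp_ι, Phi_ι, Phi_ι]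
    dsimp only
    split_ifs
    · rw [coeff_X]; split_ifs <;> simp [tp0, tp1]
    · rw [coeff_C, coeff_C]; split_ifs <;> simp [tp0, tp_ι]
  | mul a b ha hb =>
    rw [tp_mul, map_mul, map_mul, coeff_mul, coeff_mul, tp_sum,
      ← Finset.Nat.sum_antidiagonal_swap]
    refine Finset.sum_congr rfl fun x _ => ?_
    simp [tp_mul, ha, hb]
  | add a b ha hb => simp [tp_add, ha, hb]

theorem wordOf_mul_mem (l : List (Ltr d)) (a : FA F d) (ha : a ∈ MFsub F d) :
    wordOf F d l * a ∈ MFsub F d := by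
  refine Submodule.span_induction (p := fun a _ => wordOf F d l * a ∈ MFsub F d)
    ?_ (by simp) ?_ ?_ ha
  · rintro _ ⟨m, hm, rfl⟩
    refine Submodule.subset_span ⟨l ++ m, by simp [hm], by simp [wordOf]⟩
  · intro x y _ _ hx hy
    rw [mul_add]; exact add_mem hx hy
  · intro c x _ hx
    rw [mul_smul_comm]; exact Submodule.smul_mem _ _ hx

theorem MF_mul {a b : FA F d} (ha : a ∈ MFsub F d) (hb : b ∈ MFsub F d) :
    a * b ∈ MFsub F d := by
  refine Submodule.span_induction (p := fun a _ => a * b ∈ MFsub F d) ?_ (by simp) ?_ ?_ ha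
  · rintro _ ⟨m, hm, rfl⟩
    exact wordOf_mul_mem m b hb
  · intro x y _ _ hx hy
    rw [add_mul]; exact add_mem hx hy
  · intro c x _ hx
    rw [smul_mul_assoc]; exact Submodule.smul_mem _ _ hx

theorem decomp (a : FA F d) : ∃ c : F, ∃ b ∈ MFsub F d, a = algebraMap F _ c + b := by
  induction a using FreeAlgebra.induction with
  | grade0 r => exact ⟨r, 0, zero_mem _, by simp⟩
  | grade1 p => exact ⟨0, ι F p, Submodule.subset_span ⟨[p], by simp, by simp [wordOf]⟩, by simp⟩
  | mul a b ha hb =>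
    obtain ⟨c, a, ha, rfl⟩ := ha
    obtain ⟨e, b, hb, rfl⟩ := hb
    refine ⟨c * e, c • b + e • a + a * b, add_mem (add_mem (Submodule.smul_mem _ _ hb)
      (Submodule.smul_mem _ _ ha)) (MF_mul ha hb), ?_⟩
    rw [Algebra.smul_def, Algebra.smul_def, Algebra.commutes e a, map_mul]
    noncomm_ring
  | add a b ha hb =>
    obtain ⟨c, a, ha, rfl⟩ := ha
    obtain ⟨e, b, hb, rfl⟩ := hb
    refine ⟨c + e, a + b, add_mem ha hb, ?_⟩
    rw [map_add]; abel

theorem Phi_coeff_zero (i : Fin d) {a : FA F d} (ha : a ∈ MFsub F d) :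
    (Phi i a).coeff 0 ∈ MFsub F d := by
  refine Submodule.span_induction (p := fun a _ => (Phi i a).coeff 0 ∈ MFsub F d)
    ?_ (by simp) ?_ ?_ ha
  · rintro _ ⟨m, hm, rfl⟩
    induction m with
    | nil => exact absurd rfl hm
    | cons p m ih =>
      have h1 : (Phi i (ι F p)).coeff 0 ∈ MFsub F d := by
        rw [Phi_ι]
        split_ifs
        · simp
        · simp only [coeff_C_zero]
          exact Submodule.subset_span ⟨[p], by simp, by simp [wordOf]⟩
      by_cases hm' : m = []
      · subst hm'
        simpa [wordOf] using h1
      · have : wordOf F d (p :: m) = ι F p * wordOf F d m := by simp [wordOf]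
        rw [this, map_mul, mul_coeff_zero]
        exact MF_mul h1 (ih hm')
  · intro x y _ _ hx hy
    rw [map_add, coeff_add]; exact add_mem hx hy
  · intro c x _ hx
    rw [map_smul, coeff_smul]; exact Submodule.smul_mem _ _ hx

/-- Polynomials whose coefficients of index below three lie in the ideal. -/
noncomputable def IX (I : TwoSidedIdeal (FA F d)) : TwoSidedIdeal (FA F d)[X] :=
  TwoSidedIdeal.mk' {p | ∀ n < 3, p.coeff n ∈ I}
    (fun n _ => by simp)
    (fun hx hy n hn => by rw [coeff_add]; exact I.add_mem (hx n hn) (hy n hn))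
    (fun hx n hn => by rw [coeff_neg]; exact I.neg_mem (hx n hn))
    (fun {x y} hy n hn => by
      rw [coeff_mul]
      refine sum_mem fun z hz => I.mul_mem_left _ _ (hy _ ?_)
      have := Finset.HasAntidiagonal.mem_antidiagonal.1 hz
      omega)
    (fun {x y} hx n hn => by
      rw [coeff_mul]
      refine sum_mem fun z hz => I.mul_mem_right _ _ (hx _ ?_)
      have := Finset.HasAntidiagonal.mem_antidiagonal.1 hz
      omega)

theorem mem_IX (I : TwoSidedIdeal (FA F d)) (p : (FA F d)[X]) :
    p ∈ IX I ↔ ∀ n < 3, p.coeff n ∈ I := by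
  exact TwoSidedIdeal.mem_mk' _ _ _ _ _ _ _

theorem cube_mem {a : FA F d} (ha : a ∈ MFsub F d) : a ^ 3 ∈ idealA F d :=
  TwoSidedIdeal.subset_span (Or.inl ⟨a, ha, rfl⟩)

theorem T_mem {a b c : FA F d} (ha : a ∈ MFsub F d) (hb : b ∈ MFsub F d) (hc : c ∈ MFsub F d) :
    Trel F d a b c ∈ idealA F d :=
  TwoSidedIdeal.subset_span (Or.inr ⟨a, ha, b, hb, c, hc, rfl⟩)

theorem three_zero [CharP F 3] : (3 : FA F d) = 0 := by
  have h : (3 : F) = 0 := by exact_mod_cast CharP.cast_eq_zero F 3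
  rw [← map_ofNat (algebraMap F (FA F d)) 3, h, map_zero]

theorem L_mem [CharP F 3] {a b : FA F d} (ha : a ∈ MFsub F d) (hb : b ∈ MFsub F d) :
    a * a * b + a * b * a + b * a * a ∈ idealA F d := by
  have h1 := cube_mem (add_mem ha hb)
  have h2 := cube_mem (sub_mem ha hb)
  have h3 := cube_mem hb
  have h := (idealA F d).sub_mem (add_mem h2 (add_mem h3 h3)) h1
  have e : (a - b) ^ 3 + (b ^ 3 + b ^ 3) - (a + b) ^ 3
      = (a * a * b + a * b * a + b * a * a) - 3 * (a * a * b + a * b * a + b * a * a) := by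
    noncomm_ring
  rwa [e, three_zero, zero_mul, sub_zero] at h

theorem bar_algebraMap_add (c : F) (b : FA F d) : bar F d (algebraMap F _ c + b) = bar F d b := by
  rw [bar, bar, tp_add, tp_algebraMap]; abel

theorem T_mem_all [CharP F 3] (a b c : FA F d) : Trel F d a b c ∈ idealA F d := by
  obtain ⟨r, a, ha, rfl⟩ := decomp a
  obtain ⟨s, b, hb, rfl⟩ := decomp b
  obtain ⟨t, c, hc, rfl⟩ := decomp c
  have h := T_mem ha hb hc
  have e : Trel F d (algebraMap F _ r + a) (algebraMap F _ s + b) (algebraMap F _ t + c)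
      = Trel F d a b c + 3 * (algebraMap F _ r * (bar F d b * bar F d c)) := by
    rw [Trel, Trel, bar_algebraMap_add, bar_algebraMap_add, tp_add, tp_algebraMap]
    have h1 : bar F d b * (algebraMap F _ r + tp F d a) * bar F d c
      = algebraMap F _ r * (bar F d b * bar F d c) + bar F d b * tp F d a * bar F d c := by
      rw [mul_add, ← Algebra.commutes r (bar F d b)]; noncomm_ring
    have h2 : bar F d b * bar F d c * (algebraMap F _ r + a)
      = algebraMap F _ r * (bar F d b * bar F d c) + bar F d b * bar F d c * a := by
      rw [mul_add, ← Algebra.commutes r (bar F d b * bar F d c)]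
    rw [h1, h2]; noncomm_ring
  rw [e, three_zero, zero_mul, add_zero]
  exact h

theorem Phi_bar (i : Fin d) (a : FA F d) (n : ℕ) :
    (Phi i (bar F d a)).coeff n = bar F d ((Phi i a).coeff n) := by
  rw [bar, bar, map_sub, coeff_sub, Phi_tp]

theorem co1 {R : Type*} [Ring R] (p q : R[X]) :
    (p * q).coeff 1 = p.coeff 0 * q.coeff 1 + p.coeff 1 * q.coeff 0 := by
  rw [coeff_mul, show Finset.HasAntidiagonal.antidiagonal 1 = {(0, 1), (1, 0)} from rfl]
  simp

theorem co2 {R : Type*} [Ring R] (p q : R[X]) :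
    (p * q).coeff 2 = p.coeff 0 * q.coeff 2 + p.coeff 1 * q.coeff 1 + p.coeff 2 * q.coeff 0 := by
  rw [coeff_mul, show Finset.HasAntidiagonal.antidiagonal 2 = {(0, 2), (1, 1), (2, 0)} from rfl]
  simp [add_assoc]

theorem Phi_cube [CharP F 3] (i : Fin d) {a : FA F d} (ha : a ∈ MFsub F d) :
    Phi i (a ^ 3) ∈ IX (idealA F d) := by
  rw [mem_IX]
  have h0 := Phi_coeff_zero i ha
  rw [map_pow]
  generalize Phi i a = p at h0
  obtain ⟨r, a1, ha1, e1⟩ := decomp (p.coeff 1)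
  obtain ⟨s, a2, ha2, e2⟩ := decomp (p.coeff 2)
  generalize hA : p.coeff 0 = a0 at h0
  have cr := fun x : FA F d => Algebra.commutes r x
  have cs := fun x : FA F d => Algebra.commutes s x
  generalize algebraMap F (FA F d) r = R at *
  generalize algebraMap F (FA F d) s = S at *
  intro n hn
  have hpow : p ^ 3 = p * p * p := by noncomm_ring
  interval_cases n
  · have : (p ^ 3).coeff 0 = a0 ^ 3 := by
      rw [hpow]; simp only [mul_coeff_zero, hA]; noncomm_ring
    rw [this]; exact cube_mem h0
  · have : (p ^ 3).coeff 1 = (a0 * a0 * a1 + a0 * a1 * a0 + a1 * a0 * a0) + 3 * (R * a0 * a0) := by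
      rw [hpow]
      simp only [co1, co2, mul_coeff_zero, hA, e1]
      simp only [mul_add, add_mul, ← cr]
      noncomm_ring
    rw [this, three_zero, zero_mul, add_zero]; exact L_mem h0 ha1
  · have : (p ^ 3).coeff 2 = (a0 * a0 * a2 + a0 * a2 * a0 + a2 * a0 * a0) 
       + (a1 * a1 * a0 + a1 * a0 * a1 + a0 * a1 * a1)
       + 3 * (S * a0 * a0 + R * a1 * a0 + R * a0 * a1 + R * R * a0) := by
      rw [hpow]
      simp only [co1, co2, mul_coeff_zero, hA, e1, e2]
      have k1 : a0 * R = R * a0 := (cr _).symm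
      have k2 : a1 * R = R * a1 := (cr _).symm
      have k3 : a0 * S = S * a0 := (cs _).symm
      have k1' : ∀ x, a0 * (R * x) = R * (a0 * x) := fun x => by rw [← mul_assoc, k1, mul_assoc]
      have k2' : ∀ x, a1 * (R * x) = R * (a1 * x) := fun x => by rw [← mul_assoc, k2, mul_assoc]
      have k3' : ∀ x, a0 * (S * x) = S * (a0 * x) := fun x => by rw [← mul_assoc, k3, mul_assoc]
      simp only [mul_add, add_mul, mul_assoc, k1, k2, k3, k1', k2', k3']
      noncomm_ring
    rw [this, three_zero, zero_mul, add_zero]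
    exact add_mem (L_mem h0 ha2) (L_mem ha1 h0)

theorem Phi_T [CharP F 3] (i : Fin d) (a b c : FA F d) :
    Phi i (Trel F d a b c) ∈ IX (idealA F d) := by
  rw [mem_IX]
  intro n hn
  interval_cases n
  · have : (Phi i (Trel F d a b c)).coeff 0 =
        Trel F d ((Phi i a).coeff 0) ((Phi i b).coeff 0) ((Phi i c).coeff 0) := by
      simp only [Trel, map_add, map_mul, coeff_add, mul_coeff_zero, Phi_tp, Phi_bar]
    rw [this]; exact T_mem_all _ _ _
  · have : (Phi i (Trel F d a b c)).coeff 1 =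
        Trel F d ((Phi i a).coeff 1) ((Phi i b).coeff 0) ((Phi i c).coeff 0)
        + Trel F d ((Phi i a).coeff 0) ((Phi i b).coeff 1) ((Phi i c).coeff 0)
        + Trel F d ((Phi i a).coeff 0) ((Phi i b).coeff 0) ((Phi i c).coeff 1) := by
      simp only [Trel, map_add, map_mul, coeff_add, mul_coeff_zero, co1, Phi_tp, Phi_bar, add_mul,
        mul_add]
      abel
    rw [this]
    exact add_mem (add_mem (T_mem_all _ _ _) (T_mem_all _ _ _)) (T_mem_all _ _ _)
  · have : (Phi i (Trel F d a b c)).coeff 2 =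
        Trel F d ((Phi i a).coeff 2) ((Phi i b).coeff 0) ((Phi i c).coeff 0)
        + Trel F d ((Phi i a).coeff 0) ((Phi i b).coeff 2) ((Phi i c).coeff 0)
        + Trel F d ((Phi i a).coeff 0) ((Phi i b).coeff 0) ((Phi i c).coeff 2)
        + (Trel F d ((Phi i a).coeff 1) ((Phi i b).coeff 1) ((Phi i c).coeff 0)
        + Trel F d ((Phi i a).coeff 1) ((Phi i b).coeff 0) ((Phi i c).coeff 1)
        + Trel F d ((Phi i a).coeff 0) ((Phi i b).coeff 1) ((Phi i c).coeff 1)) := by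
      simp only [Trel, map_add, map_mul, coeff_add, mul_coeff_zero, co1, co2, Phi_tp, Phi_bar,
        add_mul, mul_add]
      abel
    rw [this]
    exact add_mem (add_mem (add_mem (T_mem_all _ _ _) (T_mem_all _ _ _)) (T_mem_all _ _ _))
      (add_mem (add_mem (T_mem_all _ _ _) (T_mem_all _ _ _)) (T_mem_all _ _ _))

theorem Phi_ideal [CharP F 3] (i : Fin d) {e : FA F d} (h : e ∈ idealA F d) :
    Phi i e ∈ IX (idealA F d) := by
  have hle : idealA F d ≤ (IX (idealA F d)).comap (Phi i) := by
    refine TwoSidedIdeal.span_le.2 ?_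
    rintro _ (⟨a, ha, rfl⟩ | ⟨a, -, b, -, c, -, rfl⟩)
    · exact (TwoSidedIdeal.mem_comap (Phi i)).2 (Phi_cube i ha)
    · exact (TwoSidedIdeal.mem_comap (Phi i)).2 (Phi_T i a b c)
  exact (TwoSidedIdeal.mem_comap (Phi i)).1 (hle h)

theorem Phi_word (i : Fin d) (l : List (Ltr d)) :
    Phi i (wordOf F d l) = C (piMap F d i (wordOf F d l)) * X ^ ((l.map Prod.fst).count i) := by
  induction l with
  | nil => simp [wordOf]
  | cons p m ih =>
    have : wordOf F d (p :: m) = ι F p * wordOf F d m := by simp [wordOf]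
    have h2 : piMap F d i (ι F p) = if p.1 = i then 1 else ι F p := by simp [piMap]
    rw [this, map_mul, map_mul, ih, Phi_ι, h2]
    by_cases h : p.1 = i
    · simp only [h, if_true, one_mul, List.map_cons, List.count_cons_self, pow_succ]
      rw [← mul_assoc, X_mul_C, mul_assoc, ← pow_succ', pow_succ]
    · simp [h, mul_assoc]

end helpers

/-- if `char F = 3`, `e ∈ M_F` is multihomogeneous of multidegree `δ` with
`δ_i < 3` and `Σ_{j ≠ i} δ_j > 0`, and `e = 0` in `A_{3,d}`, then `π_i(e) = 0` in `A_{3,d}`. -/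
theorem stmt9 (F : Type) [Field F] [Infinite F] [CharP F 3] (d : ℕ) (i : Fin d)
    (δ : Fin d → ℕ) (hδi : δ i < 3) (hpos : 0 < ∑ j ∈ Finset.univ.erase i, δ j)
    (e : FA F d)
    (he : e ∈ Submodule.span F {w : FA F d | ∃ l : List (Ltr d), l ≠ [] ∧
        (∀ k : Fin d, (l.map Prod.fst).count k = δ k) ∧ w = wordOf F d l})
    (h0 : e ∈ idealA F d) :
    piMap F d i e ∈ idealA F d := by
  have key : Polynomial.coeff (Phi i e) (δ i) = piMap F d i e := by
    refine Submodule.span_induction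
      (p := fun e _ => Polynomial.coeff (Phi i e) (δ i) = piMap F d i e) ?_ (by simp) ?_ ?_ he
    · rintro _ ⟨l, -, hl, rfl⟩
      rw [Phi_word, hl i, Polynomial.coeff_C_mul, Polynomial.coeff_X_pow_self, mul_one]
    · intro x y _ _ hx hy
      rw [map_add, Polynomial.coeff_add, hx, hy, map_add]
    · intro c x _ hx
      rw [map_smul, Polynomial.coeff_smul, hx, map_smul]
  rw [← key]
  exact (mem_IX _ _).1 (Phi_ideal i h0) _ hδi
end

section
/- Assume char(F) = 3. Let 0 ≤ s ≤ 4, let x_1,…,x_{8−2s} be pairwise different letters among x_1,…,x_d (so d ≥ 8−2s), let a_1,…,a_s ∈ M be words, and let u_1,…,u_{s+1} ∈ M_1 satisfy deg_{x_i}(u_1 u_2 ⋯ u_{s+1}) = 3 for every 1 ≤ i ≤ 8−2s. Then u_1 ā_1 u_2 ā_2 ⋯ u_s ā_s u_{s+1} = 0 in A_{3,d}, where ā = a − a^T. -/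
open FreeAlgebra MulOpposite

variable (F : Type) [Field F] (d : ℕ)

namespace Eng

section core
variable {R : Type} [Ring R]

lemma commut (h3 : (3 : R) = 0) (hE : ∀ a b : R, a * a * b + a * b * a + b * a * a = 0)
    (x b : R) : x * (x * b - b * x) = (x * b - b * x) * x := by
  have h := hE x b
  have h' : x * (x * b - b * x) - (x * b - b * x) * x
      = (x * x * b + x * b * x + b * x * x) - 3 * (x * b * x) := by noncomm_ring
  rw [h, h3, zero_mul, sub_zero] at h'
  exact sub_eq_zero.mp h'

lemma sq0 (h3 : (3 : R) = 0) (hE : ∀ a b : R, a * a * b + a * b * a + b * a * a = 0)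
    (x b c : R) : (x * b - b * x) * (x * c - c * x) = 0 := by
  have h1 := sub_eq_zero.mpr (commut h3 hE x b)
  have h2 := sub_eq_zero.mpr (commut h3 hE x c)
  have h4 := sub_eq_zero.mpr (commut h3 hE x (b * c))
  set Y := (x * b - b * x) * (x * c - c * x) with hY
  have e : x * (x * (b * c) - b * c * x) - (x * (b * c) - b * c * x) * x
    = (x * (x * b - b * x) - (x * b - b * x) * x) * c
      + b * (x * (x * c - c * x) - (x * c - c * x) * x) + 3 * Y - Y := by
    rw [hY]; noncomm_ring
  rw [h4, h1, h2, h3] at e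
  simp at e
  exact e

/-- `[x,b] r [x,c] = 0` -/
lemma sqr (h3 : (3 : R) = 0) (hE : ∀ a b : R, a * a * b + a * b * a + b * a * a = 0)
    (x b r c : R) : (x * b - b * x) * r * (x * c - c * x) = 0 := by
  have h1 := sq0 h3 hE x b (r * c)
  have h2 := sq0 h3 hE x b r
  have e : (x * b - b * x) * r * (x * c - c * x)
    = (x * b - b * x) * (x * (r * c) - r * c * x)
      - (x * b - b * x) * (x * r - r * x) * c := by noncomm_ring
  rw [e, h1, h2]; simp

/-- `[a,b] r [c,d] = - [c,b] r [a,d]` -/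
lemma sqlin (h3 : (3 : R) = 0) (hE : ∀ a b : R, a * a * b + a * b * a + b * a * a = 0)
    (a b r c d : R) : (a * b - b * a) * r * (c * d - d * c)
      = - ((c * b - b * c) * r * (a * d - d * a)) := by
  have h1 := sqr h3 hE (a + c) b r d
  have h2 := sqr h3 hE a b r d
  have h4 := sqr h3 hE c b r d
  have e : (a * b - b * a) * r * (c * d - d * c) + (c * b - b * c) * r * (a * d - d * a)
    = ((a + c) * b - b * (a + c)) * r * ((a + c) * d - d * (a + c))
      - (a * b - b * a) * r * (a * d - d * a) - (c * b - b * c) * r * (c * d - d * c) := by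
    noncomm_ring
  rw [h1, h2, h4] at e
  simp only [sub_zero] at e
  exact eq_neg_of_add_eq_zero_left e

/-- `[c,y] r [d,x] = [x,y] r [c,d]`, via `[c,y] r [d,x] = -[c,y] r [x,d] = [x,y] r [c,d]` -/
lemma swap1 (h3 : (3 : R) = 0) (hE : ∀ a b : R, a * a * b + a * b * a + b * a * a = 0)
    (x y r c d : R) : (c * y - y * c) * r * (d * x - x * d)
      = (x * y - y * x) * r * (c * d - d * c) := by
  have h := sqlin h3 hE c y r x d
  have e : (c * y - y * c) * r * (d * x - x * d) = - ((c * y - y * c) * r * (x * d - d * x)) := by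
    noncomm_ring
  rw [e, h, neg_neg]

/-- Jacobi-like: `[[c,x],y] = [x,y]c - c[x,y]` up to sign. -/
lemma jac (h3 : (3 : R) = 0) (hE : ∀ a b : R, a * a * b + a * b * a + b * a * a = 0)
    (x y c : R) : (c * x - x * c) * y
      = y * (c * x - x * c) + ((x * y - y * x) * c - c * (x * y - y * x)) := by
  -- `[x,[x,b]]` linearised
  have h1 := sub_eq_zero.mpr (commut h3 hE (c + y) x)
  have h2 := sub_eq_zero.mpr (commut h3 hE c x)
  have h4 := sub_eq_zero.mpr (commut h3 hE y x)
  have e : (c * x - x * c) * y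
      - (y * (c * x - x * c) + ((x * y - y * x) * c - c * (x * y - y * x)))
    = - (((c + y) * ((c + y) * x - x * (c + y)) - ((c + y) * x - x * (c + y)) * (c + y))
      - (c * (c * x - x * c) - (c * x - x * c) * c)
      - (y * (y * x - x * y) - (y * x - x * y) * y)) := by noncomm_ring
  rw [h1, h2, h4] at e
  simp only [sub_zero, neg_zero] at e
  exact sub_eq_zero.mp e

end core
end Eng

namespace Eng

section collect
variable {R : Type} [Ring R] {α : Type}

/-- Value of a list of atoms. -/
def val (v : α → R) (L : List α) : R := (L.map v).prod

@[simp] lemma val_nil (v : α → R) : val v [] = 1 := rfl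
@[simp] lemma val_cons (v : α → R) (c : α) (L : List α) : val v (c :: L) = v c * val v L := by
  simp [val]
@[simp] lemma val_append (v : α → R) (L L' : List α) : val v (L ++ L') = val v L * val v L' := by
  simp [val]

lemma pow_move (c x z : R) (h : c * x = x * c + z) (hz : x * z = z * x) (n : ℕ) :
    c * x ^ (n + 1) = x ^ (n + 1) * c + (n + 1) • (x ^ n * z) := by
  induction n with
  | zero => simp [h]
  | succ n ih =>
    have hc : z * x ^ (n + 1) = x ^ (n + 1) * z :=
      ((show Commute x z from hz).pow_left (n + 1)).symm
    rw [pow_succ' x (n + 1), ← mul_assoc, h, add_mul, mul_assoc x c, ih, hc, mul_add,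
      succ_nsmul _ (n + 1), mul_smul_comm, ← mul_assoc x (x ^ n) z, ← pow_succ', mul_assoc, add_assoc]

inductive Gen (v : α → R) (x y : R) (i j : ℕ) (m : List α) : R → Prop
  | t0 (A : List α) (h : A.Perm m) : Gen v x y i j m (x ^ i * (y ^ j * val v A))
  | t1 (n : ℕ) (A B : List α) (c : α) (hi : n + 1 = i) (h : (A ++ c :: B).Perm m) :
      Gen v x y i j m (x ^ n * (y ^ j * (val v A * (v c * x - x * v c) * val v B)))
  | t2 (k : ℕ) (A B : List α) (c : α) (hj : k + 1 = j) (h : (A ++ c :: B).Perm m) :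
      Gen v x y i j m (x ^ i * (y ^ k * (val v A * (v c * y - y * v c) * val v B)))
  | t3 (n k : ℕ) (A B : List α) (hi : n + 1 = i) (hj : k + 1 = j) (h : (A ++ B).Perm m) :
      Gen v x y i j m (x ^ n * (y ^ k * (val v A * (x * y - y * x) * val v B)))

def K (v : α → R) (x y : R) (i j : ℕ) (m : List α) : AddSubgroup R :=
  AddSubgroup.closure {r | Gen v x y i j m r}

lemma K_of {v : α → R} {x y : R} {i j : ℕ} {m : List α} {r : R} (h : Gen v x y i j m r) :
    r ∈ K v x y i j m := AddSubgroup.subset_closure h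

lemma K_mul {v : α → R} {x y : R} {i j i' j' : ℕ} {m m' : List α} (c : R)
    (h : ∀ r, Gen v x y i j m r → c * r ∈ K v x y i' j' m') {r : R} (hr : r ∈ K v x y i j m) :
    c * r ∈ K v x y i' j' m' := by
  refine AddSubgroup.closure_induction (fun r hr => h r hr) ?_ ?_ ?_ hr
  · simp
  · intro a b _ _ ha hb; rw [mul_add]; exact add_mem ha hb
  · intro a _ ha; rw [mul_neg]; exact neg_mem ha

lemma K_x {v : α → R} {x y : R} {i j : ℕ} {m : List α} {r : R} (hr : r ∈ K v x y i j m) :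
    x * r ∈ K v x y (i + 1) j m := by
  refine K_mul x ?_ hr
  intro r hr
  cases hr with
  | t0 A h => rw [← mul_assoc, ← pow_succ']; exact K_of (.t0 A h)
  | t1 n A B c hi h => rw [← mul_assoc, ← pow_succ']; exact K_of (.t1 (n+1) A B c (by omega) h)
  | t2 k A B c hj h => rw [← mul_assoc, ← pow_succ']; exact K_of (.t2 k A B c hj h)
  | t3 n k A B hi hj h =>
    rw [← mul_assoc, ← pow_succ']; exact K_of (.t3 (n+1) k A B (by omega) hj h)

variable (h3 : (3 : R) = 0) (hE : ∀ a b : R, a * a * b + a * b * a + b * a * a = 0)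
include h3 hE

lemma move (c x : R) (n : ℕ) :
    c * x ^ (n + 1) = x ^ (n + 1) * c + (n + 1) • (x ^ n * (c * x - x * c)) := by
  apply pow_move
  · noncomm_ring
  · have := commut h3 hE x c
    have e : c * x - x * c = - (x * c - c * x) := by noncomm_ring
    rw [e, mul_neg, neg_mul, this]

/-- moving past a power when the commutator kills -/
lemma move_kill (c x δ : R) (n : ℕ) (hk : (c * x - x * c) * δ = 0) :
    c * (x ^ n * δ) = x ^ n * (c * δ) := by
  cases n with
  | zero => simp
  | succ n =>
    rw [← mul_assoc, move h3 hE, add_mul, smul_mul_assoc, mul_assoc (x ^ n), hk]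
    simp [mul_assoc]

lemma kill (x c r d s : R) : (c * x - x * c) * (r * (d * x - x * d) * s) = 0 := by
  have h := sqr h3 hE x c r d
  have e : (c * x - x * c) * (r * (d * x - x * d) * s)
    = ((x * c - c * x) * r * (x * d - d * x)) * s := by noncomm_ring
  rw [e, h, zero_mul]

lemma kill' (x c r d s : R) : (c * x - x * c) * (r * (x * d - d * x) * s) = 0 := by
  have h := sqr h3 hE x c r d
  have e : (c * x - x * c) * (r * (x * d - d * x) * s)
    = - (((x * c - c * x) * r * (x * d - d * x)) * s) := by noncomm_ring
  rw [e, h, zero_mul, neg_zero]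

lemma K_y {v : α → R} {x y : R} {i j : ℕ} {m : List α} {r : R} (hr : r ∈ K v x y i j m) :
    y * r ∈ K v x y i (j + 1) m := by
  refine K_mul y ?_ hr
  intro r hr
  cases hr with
  | t0 A h =>
    have hA : x ^ i * (y ^ (j+1) * val v A) ∈ K v x y i (j + 1) m := K_of (.t0 A h)
    cases i with
    | zero => simpa [pow_succ', mul_assoc] using hA
    | succ n =>
      have hB : x ^ n * (y ^ j * (val v [] * (x * y - y * x) * val v A)) ∈ K v x y (n+1) (j + 1) m :=
        K_of (.t3 n j [] A rfl rfl h)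
      have hc : (x * y - y * x) * y ^ j = y ^ j * (x * y - y * x) := by
        refine (Commute.pow_left (M := R) (a := y) (b := x * y - y * x) ?_ j).symm
        have := commut h3 hE y x
        have e : x * y - y * x = - (y * x - x * y) := by noncomm_ring
        show _ = _
        rw [e, mul_neg, neg_mul, this]
      have : y * (x ^ (n+1) * (y ^ j * val v A)) = x ^ (n+1) * (y ^ (j+1) * val v A)
          - (n+1) • (x ^ n * (y ^ j * (val v [] * (x * y - y * x) * val v A))) := by
        rw [← mul_assoc, move h3 hE, add_mul, sub_eq_add_neg (x ^ (n + 1) * _)]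
        congr 1
        · simp [pow_succ', mul_assoc]
        · rw [smul_mul_assoc, ← smul_neg]
          congr 1
          rw [val_nil, one_mul, ← mul_assoc (y ^ j), ← hc]
          noncomm_ring
      rw [this]
      exact sub_mem hA (nsmul_mem hB _)
  | t1 n A B c hi h =>
    rw [move_kill h3 hE]
    · rw [← mul_assoc y, ← pow_succ']; exact K_of (.t1 n A B c hi h)
    · rw [← mul_assoc (y ^ j), ← mul_assoc (y ^ j)]
      exact kill h3 hE _ _ _ _ _
  | t2 k A B c hj h =>
    rw [move_kill h3 hE]
    · rw [← mul_assoc y, ← pow_succ']; exact K_of (.t2 (k+1) A B c (by omega) h)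
    · have e : y * x - x * y = - (x * y - y * x) := by noncomm_ring
      rw [← mul_assoc (y ^ k), ← mul_assoc (y ^ k), e, neg_mul, kill h3 hE, neg_zero]
  | t3 n k A B hi hj h =>
    rw [move_kill h3 hE]
    · rw [← mul_assoc y, ← pow_succ']; exact K_of (.t3 n (k+1) A B hi (by omega) h)
    · rw [← mul_assoc (y ^ k), ← mul_assoc (y ^ k)]
      exact kill' h3 hE _ _ _ _ _

lemma K_c {v : α → R} {x y : R} {i j : ℕ} {m : List α} (c : α) {r : R} (hr : r ∈ K v x y i j m) :
    v c * r ∈ K v x y i j (c :: m) := by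
  refine K_mul (v c) ?_ hr
  intro r hr
  have hcomm : ∀ k : ℕ, (x * y - y * x) * y ^ k = y ^ k * (x * y - y * x) := by
    intro k
    refine (Commute.pow_left (M := R) (a := y) (b := x * y - y * x) ?_ k).symm
    have := commut h3 hE y x
    have e : x * y - y * x = - (y * x - x * y) := by noncomm_ring
    show _ = _
    rw [e, mul_neg, neg_mul, this]
  cases hr with
  | t0 A h =>
    -- y part
    have key : ∀ n, x ^ n * (v c * (y ^ j * val v A)) ∈ K v x y n j (c :: m) := by
      intro n
      have h0 : x ^ n * (y ^ j * val v (c :: A)) ∈ K v x y n j (c :: m) := K_of (.t0 _ (h.cons c))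
      cases j with
      | zero => simpa using h0
      | succ k =>
        have h2 : x ^ n * (y ^ k * (val v [] * (v c * y - y * v c) * val v A))
          ∈ K v x y n (k+1) (c :: m) := K_of (.t2 k [] A c rfl (h.cons c))
        have e : x ^ n * (v c * (y ^ (k+1) * val v A)) = x ^ n * (y ^ (k+1) * val v (c :: A))
          + (k+1) • (x ^ n * (y ^ k * (val v [] * (v c * y - y * v c) * val v A))) := by
          rw [← mul_assoc (v c), move h3 hE, add_mul, mul_add]
          congr 1
          · simp [mul_assoc]
          · rw [smul_mul_assoc, mul_smul_comm]
            congr 1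
            simp [mul_assoc]
        rw [e]; exact add_mem h0 (nsmul_mem h2 _)
    cases i with
    | zero => simpa using key 0
    | succ n =>
      have e : v c * (x ^ (n+1) * (y ^ j * val v A)) = x ^ (n+1) * (v c * (y ^ j * val v A))
        + (n+1) • (x ^ n * ((v c * x - x * v c) * (y ^ j * val v A))) := by
        rw [← mul_assoc, move h3 hE, add_mul, smul_mul_assoc]; simp only [mul_assoc]
      rw [e]
      refine add_mem (key _) (nsmul_mem ?_ _)
      have h1 : x ^ n * (y ^ j * (val v [] * (v c * x - x * v c) * val v A))
        ∈ K v x y (n+1) j (c :: m) := K_of (.t1 n [] A c rfl (h.cons c))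
      cases j with
      | zero => simpa using h1
      | succ k =>
        have h3a : x ^ n * (y ^ k * (val v [] * (x * y - y * x) * val v (c :: A)))
          ∈ K v x y (n+1) (k+1) (c :: m) := K_of (.t3 n k [] (c :: A) rfl rfl (h.cons c))
        have h3b : x ^ n * (y ^ k * (val v [c] * (x * y - y * x) * val v A))
          ∈ K v x y (n+1) (k+1) (c :: m) := K_of (.t3 n k [c] A rfl rfl (h.cons c))
        have e2 : x ^ n * ((v c * x - x * v c) * (y ^ (k+1) * val v A))
          = x ^ n * (y ^ (k+1) * (val v [] * (v c * x - x * v c) * val v A))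
          + (k+1) • (x ^ n * (y ^ k * (val v [] * (x * y - y * x) * val v (c :: A)))
            - x ^ n * (y ^ k * (val v [c] * (x * y - y * x) * val v A))) := by
          rw [← mul_assoc (v c * x - x * v c), move h3 hE]
          have j1 := jac h3 hE x y (v c)
          have j2 : (v c * x - x * v c) * y - y * (v c * x - x * v c)
            = ((x * y - y * x) * v c - v c * (x * y - y * x)) := by
            rw [j1]; abel
          rw [j2, add_mul, mul_add]
          congr 1
          · simp [mul_assoc]
          · rw [smul_mul_assoc, mul_smul_comm]
            congr 1
            simp only [val_nil, val_cons, one_mul, mul_one]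
            noncomm_ring
        rw [e2]
        exact add_mem h1 (nsmul_mem (sub_mem h3a h3b) _)
  | t1 n A B d hi h =>
    rw [move_kill h3 hE]
    · have h1 : x ^ n * (y ^ j * (val v (c :: A) * (v d * x - x * v d) * val v B))
        ∈ K v x y i j (c :: m) := K_of (.t1 n (c :: A) B d hi (h.cons c))
      cases j with
      | zero => simpa [mul_assoc] using h1
      | succ k =>
        have p1 : (A ++ c :: d :: B).Perm (c :: m) :=
          List.perm_middle.trans (h.cons c)
        have p2 : (A ++ d :: c :: B).Perm (c :: m) :=
          ((List.Perm.swap c d B).append_left A).trans p1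
        have ha : x ^ n * (y ^ k * (val v [] * (x * y - y * x) * val v (A ++ c :: d :: B)))
          ∈ K v x y i (k+1) (c :: m) := K_of (.t3 n k [] _ hi rfl p1)
        have hb : x ^ n * (y ^ k * (val v [] * (x * y - y * x) * val v (A ++ d :: c :: B)))
          ∈ K v x y i (k+1) (c :: m) := K_of (.t3 n k [] _ hi rfl p2)
        have e : x ^ n * (v c * (y ^ (k+1) * (val v A * (v d * x - x * v d) * val v B)))
          = x ^ n * (y ^ (k+1) * (val v (c :: A) * (v d * x - x * v d) * val v B))
          + (k+1) • (x ^ n * (y ^ k * (val v [] * (x * y - y * x) * val v (A ++ c :: d :: B)))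
            - x ^ n * (y ^ k * (val v [] * (x * y - y * x) * val v (A ++ d :: c :: B)))) := by
          rw [← mul_assoc (v c), move h3 hE, add_mul, mul_add]
          congr 1
          · simp [mul_assoc]
          · rw [smul_mul_assoc, mul_smul_comm]
            congr 1
            have s := swap1 h3 hE x y (val v A) (v c) (v d)
            have s2 : x ^ n * (y ^ k * (v c * y - y * v c) * (val v A * (v d * x - x * v d) * val v B))
              = x ^ n * (y ^ k * (((v c * y - y * v c) * val v A * (v d * x - x * v d)) * val v B)) := by
              simp only [mul_assoc]
            rw [s2, s]
            simp only [val_nil, val_cons, val_append, one_mul, ← mul_sub]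
            congr 2
            noncomm_ring
        rw [e]
        exact add_mem h1 (nsmul_mem (sub_mem ha hb) _)
    · rw [← mul_assoc (y ^ j), ← mul_assoc (y ^ j)]
      exact kill h3 hE _ _ _ _ _
  | t2 k A B d hj h =>
    have h2 : x ^ i * (y ^ k * (val v (c :: A) * (v d * y - y * v d) * val v B))
        ∈ K v x y i j (c :: m) := K_of (.t2 k (c :: A) B d hj (h.cons c))
    have mk := move_kill h3 hE (v c) y (val v A * (v d * y - y * v d) * val v B) k
      (kill h3 hE _ _ _ _ _)
    have h2' : x ^ i * (v c * (y ^ k * (val v A * (v d * y - y * v d) * val v B)))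
        ∈ K v x y i j (c :: m) := by
      rw [mk]; simpa [mul_assoc] using h2
    cases i with
    | zero => simpa using h2'
    | succ n =>
      have e : v c * (x ^ (n+1) * (y ^ k * (val v A * (v d * y - y * v d) * val v B)))
        = x ^ (n+1) * (v c * (y ^ k * (val v A * (v d * y - y * v d) * val v B)))
        + (n+1) • (x ^ n * ((v c * x - x * v c) *
            (y ^ k * (val v A * (v d * y - y * v d) * val v B)))) := by
        rw [← mul_assoc, move h3 hE, add_mul, smul_mul_assoc]; simp only [mul_assoc]
      rw [e]
      refine add_mem h2' (nsmul_mem ?_ _)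
      have p1 : (A ++ c :: d :: B).Perm (c :: m) :=
        List.perm_middle.trans (h.cons c)
      have p2 : (A ++ d :: c :: B).Perm (c :: m) :=
        ((List.Perm.swap c d B).append_left A).trans p1
      have ha : x ^ n * (y ^ k * (val v [] * (x * y - y * x) * val v (A ++ c :: d :: B)))
        ∈ K v x y (n+1) j (c :: m) := K_of (.t3 n k [] _ rfl hj p1)
      have hb : x ^ n * (y ^ k * (val v [] * (x * y - y * x) * val v (A ++ d :: c :: B)))
        ∈ K v x y (n+1) j (c :: m) := K_of (.t3 n k [] _ rfl hj p2)
      have s := swap1 h3 hE y x (y ^ k * val v A) (v c) (v d)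
      have s2 : x ^ n * ((v c * x - x * v c) * (y ^ k * (val v A * (v d * y - y * v d) * val v B)))
        = x ^ n * (((v c * x - x * v c) * (y ^ k * val v A) * (v d * y - y * v d)) * val v B) := by
        simp only [mul_assoc]
      have s4 : (y * x - x * y) * (y ^ k * val v A) * (v c * v d - v d * v c) * val v B
        = - (((x * y - y * x) * y ^ k) * (val v A * (v c * v d - v d * v c) * val v B)) := by
        noncomm_ring
      have s5 : x ^ n * ((v c * x - x * v c) * (y ^ k * (val v A * (v d * y - y * v d) * val v B)))
        = x ^ n * (y ^ k * (val v [] * (x * y - y * x) * val v (A ++ d :: c :: B)))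
          - x ^ n * (y ^ k * (val v [] * (x * y - y * x) * val v (A ++ c :: d :: B))) := by
        rw [s2, s, s4, hcomm]
        simp only [val_nil, val_cons, val_append, one_mul, ← mul_sub]
        have s6 : val v A * (v d * (v c * val v B)) - val v A * (v c * (v d * val v B))
          = - (val v A * (v c * v d - v d * v c) * val v B) := by noncomm_ring
        rw [← mul_sub] at s6
        rw [s6]
        simp only [mul_neg, mul_assoc]
      rw [s5]
      exact sub_mem hb ha
  | t3 n k A B hi hj h =>
    rw [move_kill h3 hE, move_kill h3 hE]
    · have := K_of (v := v) (x := x) (y := y) (.t3 n k (c :: A) B hi hj (h.cons c))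
      simpa [mul_assoc] using this
    · have e : x * y - y * x = - (y * x - x * y) := by noncomm_ring
      rw [e, mul_neg, neg_mul, mul_neg, kill' h3 hE, neg_zero]
    · rw [← mul_assoc (y ^ k), ← mul_assoc (y ^ k)]
      exact kill' h3 hE _ _ _ _ _

lemma val_mem_K [DecidableEq α] (v : α → R) (a b : α) (hab : a ≠ b) (L : List α) :
    val v L ∈ K v (v a) (v b) (L.count a) (L.count b)
      (L.filter (fun c => c ≠ a ∧ c ≠ b)) := by
  induction L with
  | nil =>
    have := K_of (v := v) (x := v a) (y := v b) (.t0 (i := 0) (j := 0) (m := []) [] (List.Perm.refl _))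
    simpa using this
  | cons c L ih =>
    rw [val_cons]
    by_cases hca : c = a
    · subst hca
      have := K_x ih
      simpa [List.count_cons, hab] using this
    · by_cases hcb : c = b
      · subst hcb
        have := K_y h3 hE ih
        simpa [List.count_cons, Ne.symm hab, hca] using this
      · have := K_c h3 hE c ih
        simpa [List.count_cons, hca, hcb] using this

/-- The main collecting lemma. -/
lemma collect [DecidableEq α] (v : α → R) (a b : α) (hab : a ≠ b) (L : List α)
    (ha : L.count a = 3) (hb : L.count b = 3) (ha3 : v a ^ 3 = 0) (hb3 : v b ^ 3 = 0)
    (H : ∀ A B : List α, (A ++ B).Perm (L.filter (fun c => c ≠ a ∧ c ≠ b)) →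
      v a ^ 2 * (v b ^ 2 * (val v A * (v a * v b - v b * v a) * val v B)) = 0) :
    val v L = 0 := by
  have h := val_mem_K h3 hE v a b hab L
  rw [ha, hb] at h
  refine AddSubgroup.closure_induction (p := fun r _ => r = 0) ?_ rfl ?_ ?_ h
  · intro r hr
    cases hr with
    | t0 A h => simp [ha3]
    | t1 n A B c hi h => simp [hb3]
    | t2 k A B c hj h => simp [ha3]
    | t3 n k A B hi hj h =>
      obtain rfl : n = 2 := by omega
      obtain rfl : k = 2 := by omega
      exact H A B h
  · rintro a b _ _ rfl rfl; simp
  · rintro a _ rfl; simp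

end collect
end Eng

namespace Eng
section quot
variable {F : Type} [Field F] {d : ℕ}

lemma tp_mul (a b : FA F d) : tp F d (a * b) = tp F d b * tp F d a := by
  simp [tp]
lemma tp_add (a b : FA F d) : tp F d (a + b) = tp F d a + tp F d b := by
  simp [tp]
lemma tp_sub (a b : FA F d) : tp F d (a - b) = tp F d a - tp F d b := by
  simp [tp]
lemma tp_neg (a : FA F d) : tp F d (-a) = - tp F d a := by
  simp [tp]
lemma tp_alg (c : F) : tp F d (algebraMap F _ c) = algebraMap F _ c := by
  simp [tp]
lemma tp_ι (p : Ltr d) : tp F d (FreeAlgebra.ι F p) = FreeAlgebra.ι F (p.1, !p.2) := by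
  simp [tp]
lemma tp_tp (a : FA F d) : tp F d (tp F d a) = a := by
  induction a using FreeAlgebra.induction with
  | grade0 r => rw [tp_alg, tp_alg]
  | grade1 x => simp [tp_ι]
  | mul a b ha hb => rw [tp_mul, tp_mul, ha, hb]
  | add a b ha hb => rw [tp_add, tp_add, ha, hb]
lemma tp_bar (a : FA F d) : tp F d (bar F d a) = - bar F d a := by
  simp [bar, tp_sub, tp_tp]

lemma wordOf_append (l l' : List (Ltr d)) :
    wordOf F d (l ++ l') = wordOf F d l * wordOf F d l' := by
  simp [wordOf]

lemma MF_mul {a b : FA F d} (ha : a ∈ MFsub F d) (hb : b ∈ MFsub F d) : a * b ∈ MFsub F d := by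
  have h := Submodule.mul_mem_mul ha hb
  rw [MFsub, Submodule.span_mul_span] at h
  refine Submodule.span_mono ?_ h
  rintro _ ⟨_, ⟨l, hl, rfl⟩, _, ⟨l', hl', rfl⟩, rfl⟩
  exact ⟨l ++ l', by simp [hl], by simp [wordOf_append]⟩

lemma decomp (a : FA F d) : ∃ (c : F) (n : FA F d), n ∈ MFsub F d ∧ a = algebraMap F _ c + n := by
  induction a using FreeAlgebra.induction with
  | grade0 r => exact ⟨r, 0, zero_mem _, by simp⟩
  | grade1 x =>
    exact ⟨0, FreeAlgebra.ι F x, Submodule.subset_span ⟨[x], by simp, by simp [wordOf]⟩, by simp⟩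
  | mul a b ha hb =>
    obtain ⟨c, n, hn, rfl⟩ := ha
    obtain ⟨c', n', hn', rfl⟩ := hb
    refine ⟨c * c', c • n' + c' • n + n * n', ?_, ?_⟩
    · exact add_mem (add_mem (Submodule.smul_mem _ _ hn') (Submodule.smul_mem _ _ hn)) (MF_mul hn hn')
    · rw [Algebra.smul_def, Algebra.smul_def, Algebra.commutes c' n, map_mul]
      noncomm_ring
  | add a b ha hb =>
    obtain ⟨c, n, hn, rfl⟩ := ha
    obtain ⟨c', n', hn', rfl⟩ := hb
    exact ⟨c + c', n + n', add_mem hn hn', by rw [map_add]; abel⟩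

variable (F d) in
/-- The quotient ring. -/
abbrev Q := (idealA F d).ringCon.Quotient

variable (F d) in
def pr : FA F d →+* Q F d := (idealA F d).ringCon.mk'

lemma pr_zero {a : FA F d} : pr F d a = 0 ↔ a ∈ idealA F d := by
  rw [TwoSidedIdeal.mem_iff, ← RingCon.eq]
  rfl

variable [CharP F 3]

lemma three_FA : (3 : FA F d) = 0 := by
  have : (3 : F) = 0 := by exact_mod_cast CharP.cast_eq_zero F 3
  have h : (3 : FA F d) = algebraMap F _ 3 := (map_ofNat (algebraMap F (FA F d)) 3).symm
  rw [h, this, map_zero]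

lemma three_Q : (3 : Q F d) = 0 := by
  have := congrArg (pr F d) (three_FA (F := F) (d := d))
  rwa [map_zero, map_ofNat] at this

omit [CharP F 3] in
lemma cube {n : FA F d} (hn : n ∈ MFsub F d) : pr F d n ^ 3 = 0 := by
  rw [← map_pow, pr_zero]
  exact TwoSidedIdeal.subset_span (Or.inl ⟨n, hn, rfl⟩)

omit [CharP F 3] in
lemma Trel_zero {a b c : FA F d} (ha : a ∈ MFsub F d) (hb : b ∈ MFsub F d) (hc : c ∈ MFsub F d) :
    pr F d (Trel F d a b c) = 0 := by
  rw [pr_zero]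
  exact TwoSidedIdeal.subset_span (Or.inr ⟨a, ha, b, hb, c, hc, rfl⟩)

lemma engel0 {n b : FA F d} (hn : n ∈ MFsub F d) (hb : b ∈ MFsub F d) :
    pr F d (n * n * b + n * b * n + b * n * n) = 0 := by
  have h1 := cube (add_mem hn hb)
  have h2 := cube (sub_mem hn hb)
  have h4 := cube hb
  rw [map_add] at h1
  rw [map_sub] at h2
  simp only [map_add, map_mul]
  set N := pr F d n
  set B := pr F d b
  have e : N * N * B + N * B * N + B * N * N
    = 3 * (N * N * B + N * B * N + B * N * N) - ((N + B) ^ 3 - (N - B) ^ 3 - 2 * B ^ 3) := by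
    noncomm_ring
  rw [e, h1, h2, h4, three_Q]; simp

lemma engel (a b : Q F d) : a * a * b + a * b * a + b * a * a = 0 := by
  obtain ⟨a, rfl⟩ := (idealA F d).ringCon.mk'_surjective a
  obtain ⟨b, rfl⟩ := (idealA F d).ringCon.mk'_surjective b
  change pr F d a * pr F d a * pr F d b + pr F d a * pr F d b * pr F d a
    + pr F d b * pr F d a * pr F d a = 0
  obtain ⟨c, n, hn, rfl⟩ := decomp a
  obtain ⟨c', n', hn', rfl⟩ := decomp b
  have h := engel0 hn hn'
  have h5 := cube hn
  have hc : ∀ z, pr F d (algebraMap F _ c) * z = z * pr F d (algebraMap F _ c) := by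
    intro z
    obtain ⟨z, rfl⟩ := (idealA F d).ringCon.mk'_surjective z
    change pr F d _ * pr F d z = pr F d z * pr F d _
    rw [← map_mul, Algebra.commutes, map_mul]
  have hc' : ∀ z, pr F d (algebraMap F _ c') * z = z * pr F d (algebraMap F _ c') := by
    intro z
    obtain ⟨z, rfl⟩ := (idealA F d).ringCon.mk'_surjective z
    change pr F d _ * pr F d z = pr F d z * pr F d _
    rw [← map_mul, Algebra.commutes, map_mul]
  simp only [map_add, map_mul] at h ⊢
  set N := pr F d n
  set B := pr F d n'
  set C := pr F d (algebraMap F _ c)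
  set C' := pr F d (algebraMap F _ c')
  -- replace `B' = C' + B`
  have e1 : (C + N) * (C + N) * (C' + B) + (C + N) * (C' + B) * (C + N)
      + (C' + B) * (C + N) * (C + N)
    = 3 * ((C + N) * (C + N) * C') + (C + N) * (C' * (C + N) - (C + N) * C')
      + (C' * (C + N) - (C + N) * C') * (C + N) + (C + N) * (C' * (C + N) - (C + N) * C')
      + ((N * N * B + N * B * N + B * N * N) + 3 * (C * C * B + C * N * B + C * B * N)
      + (B * C - C * B) * C + (B * C - C * B) * N + (B * N * C - C * (B * N)) + (N * C - C * N) * B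
      + (N * B * C - C * (N * B)) + C * (B * C - C * B) + C * (B * C - C * B)) := by
    noncomm_ring
  rw [e1, h, three_Q, hc' (C + N), hc B, hc (B * N), hc N, hc (N * B)]
  simp

lemma Tid (a b c : FA F d) :
    pr F d a * pr F d (bar F d b) * pr F d (bar F d c)
    + pr F d (bar F d b) * pr F d (tp F d a) * pr F d (bar F d c)
    + pr F d (bar F d b) * pr F d (bar F d c) * pr F d a = 0 := by
  obtain ⟨α, a, ha, rfl⟩ := decomp a
  obtain ⟨β, b, hb, rfl⟩ := decomp b
  obtain ⟨γ, c, hc, rfl⟩ := decomp c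
  have e : ∀ (β : F) (b : FA F d), bar F d (algebraMap F _ β + b) = bar F d b := by
    intro β b; simp [bar, tp_add, tp_alg]
  rw [e, e, tp_add, tp_alg]
  have h := Trel_zero ha hb hc
  simp only [Trel, map_add, map_mul] at h
  have hcc : ∀ z, pr F d (algebraMap F _ α) * z = z * pr F d (algebraMap F _ α) := by
    intro z
    obtain ⟨z, rfl⟩ := (idealA F d).ringCon.mk'_surjective z
    change pr F d _ * pr F d z = pr F d z * pr F d _
    rw [← map_mul, Algebra.commutes, map_mul]
  simp only [map_add]
  set A := pr F d a
  set A' := pr F d (tp F d a)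
  set B := pr F d (bar F d b)
  set D := pr F d (bar F d c)
  set C := pr F d (algebraMap F _ α)
  have e1 : (C + A) * B * D + B * (C + A') * D + B * D * (C + A)
    = (A * B * D + B * A' * D + B * D * A) + 3 * (C * B * D) + (B * C - C * B) * D
      + (B * D * C - C * (B * D)) := by noncomm_ring
  rw [e1, h, three_Q, hcc B, hcc (B * D)]; simp

lemma flip3 (p q r : FA F d) : pr F d (bar F d p) * pr F d (bar F d q) * pr F d (bar F d r) + pr F d (bar F d r) * pr F d (bar F d q) * pr F d (bar F d p) = 0 := by
  have h1 := Tid (bar F d r) p q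
  have h2 := Tid (bar F d p) r q
  rw [tp_bar, map_neg] at h1 h2
  set P := pr F d (bar F d p)
  set Q' := pr F d (bar F d q)
  set R' := pr F d (bar F d r)
  have : P * Q' * R' + R' * Q' * P = (R' * P * Q' + P * -R' * Q' + P * Q' * R')
    + (P * R' * Q' + R' * -P * Q' + R' * Q' * P) := by noncomm_ring
  rw [this, h1, h2, add_zero]

lemma four (r s p q : FA F d) : pr F d (bar F d r) * pr F d (bar F d s) * pr F d (bar F d p) * pr F d (bar F d q) = 0 := by
  have h1 := Tid (bar F d p * bar F d q) r s
  have h2 := flip3 p q r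
  rw [tp_mul, tp_bar, tp_bar, neg_mul_neg, map_mul, map_mul] at h1
  set P := pr F d (bar F d p)
  set Q' := pr F d (bar F d q)
  set R' := pr F d (bar F d r)
  set S := pr F d (bar F d s)
  have : R' * S * P * Q' = (P * Q' * R' * S + R' * (Q' * P) * S + R' * S * (P * Q'))
    - (P * Q' * R' + R' * Q' * P) * S := by noncomm_ring
  rw [this, h1, h2]; simp

lemma four_mid (p q r s : FA F d) (e : FA F d) : pr F d (bar F d p) * pr F d (bar F d q) * pr F d e * pr F d (bar F d r) * pr F d (bar F d s) = 0 := by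
  have h1 := Tid (tp F d e) q r
  have h2 := Tid e p q
  have h4 := Tid e r s
  have h5 := four p q r s
  rw [tp_tp] at h1
  set P := pr F d (bar F d p)
  set Q' := pr F d (bar F d q)
  set R' := pr F d (bar F d r)
  set S := pr F d (bar F d s)
  set E := pr F d e
  set E' := pr F d (tp F d e)
  have : P * Q' * E * R' * S =
     - (P * (E' * Q' * R' + Q' * E * R' + Q' * R' * E') * S
      - (E * P * Q' + P * E' * Q' + P * Q' * E) * R' * S
      - P * Q' * (E * R' * S + R' * E' * S + R' * S * E)
      + E * (P * Q' * R' * S) + (P * Q' * R' * S) * E) := by noncomm_ring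
  rw [this, h1, h2, h4, h5]; simp

lemma pull (p u q : FA F d) : pr F d (bar F d p) * pr F d u * pr F d (bar F d q)
    = - (pr F d (tp F d u) * pr F d (bar F d p) * pr F d (bar F d q)) - pr F d (bar F d p) * pr F d (bar F d q) * pr F d (tp F d u) := by
  have h1 := Tid (tp F d u) p q
  rw [tp_tp] at h1
  set P := pr F d (bar F d p)
  set Q' := pr F d (bar F d q)
  set E := pr F d u
  set E' := pr F d (tp F d u)
  have : P * E * Q' = (E' * P * Q' + P * E * Q' + P * Q' * E') - E' * P * Q' - P * Q' * E' := by
    noncomm_ring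
  rw [this, h1]; abel

lemma four_gen (p u q v r w s : FA F d) :
    pr F d (bar F d p) * pr F d u * pr F d (bar F d q) * pr F d v * (pr F d (bar F d r) * pr F d w * pr F d (bar F d s)) = 0 := by
  rw [pull p u q, pull r w s]
  have h1 := four_mid p q r s (v * tp F d w)
  have h2 := four_mid p q r s v
  have h4 := four_mid p q r s (tp F d u * v * tp F d w)
  have h5 := four_mid p q r s (tp F d u * v)
  simp only [map_mul] at h1 h2 h4 h5 ⊢
  set P := pr F d (bar F d p)
  set Q' := pr F d (bar F d q)
  set R' := pr F d (bar F d r)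
  set S := pr F d (bar F d s)
  set U := pr F d (tp F d u)
  set V := pr F d v
  set W := pr F d (tp F d w)
  have : (-(U * P * Q') - P * Q' * U) * V * (-(W * R' * S) - R' * S * W)
    = U * (P * Q' * (V * W) * R' * S) + U * (P * Q' * V * R' * S) * W
      + P * Q' * (U * V * W) * R' * S + (P * Q' * (U * V) * R' * S) * W := by noncomm_ring
  rw [this, h1, h2, h4, h5]; simp

variable (d) in
/-- Atoms: letters and bars of words. -/
inductive Atom
  | lt (x : Ltr d)
  | br (w : List (Ltr d))

noncomputable instance : DecidableEq (Atom d) := Classical.decEq _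

def Atom.isBr : Atom d → Bool
  | .lt _ => false
  | .br _ => true

@[simp] lemma isBr_lt (x : Ltr d) : (Atom.lt x).isBr = false := rfl
@[simp] lemma isBr_br (w : List (Ltr d)) : (Atom.br w).isBr = true := rfl

variable (F d) in
def av : (Atom d) → Q F d
  | .lt l => pr F d (FreeAlgebra.ι F l)
  | .br w => pr F d (bar F d (wordOf F d w))

omit [CharP F 3] in
lemma val_pr (L : List (Atom d)) : ∃ u : FA F d, val (av F d) L = pr F d u := by
  obtain ⟨u, hu⟩ := (idealA F d).ringCon.mk'_surjective (val (av F d) L)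
  exact ⟨u, hu.symm⟩

lemma split_bar (L : List (Atom d)) (n : ℕ) (h : n + 1 ≤ L.countP Atom.isBr) :
    ∃ A w B, L = A ++ .br w :: B ∧ n ≤ B.countP Atom.isBr := by
  induction L with
  | nil => simp at h
  | cons c L ih =>
    cases c with
    | lt c =>
      obtain ⟨A, w, B, rfl, hB⟩ := ih (by simpa [List.countP_cons] using h)
      exact ⟨.lt c :: A, w, B, rfl, hB⟩
    | br c => exact ⟨[], c, L, rfl, by simpa [List.countP_cons] using h⟩

lemma base (L : List (Atom d)) (h : 4 ≤ L.countP Atom.isBr) :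
    val (av F d) L = 0 := by
  obtain ⟨A, p, L, rfl, g1⟩ := split_bar L 3 h
  obtain ⟨U, q, L, rfl, g2⟩ := split_bar L 2 g1
  obtain ⟨V, r, L, rfl, g3⟩ := split_bar L 1 g2
  obtain ⟨W, s, L, rfl, g4⟩ := split_bar L 0 g3
  obtain ⟨u, hu⟩ := val_pr (F := F) U
  obtain ⟨v, hv⟩ := val_pr (F := F) V
  obtain ⟨w, hw⟩ := val_pr (F := F) W
  have := four_gen (F := F) (d := d) (wordOf F d p) u (wordOf F d q) v (wordOf F d r) w (wordOf F d s)
  simp only [val_append, val_cons, hu, hv, hw, av]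
  simp only [mul_assoc] at this ⊢
  simp only [← mul_assoc (pr F d (bar F d (wordOf F d p)))] at *
  have t2 := congrArg (fun z => val (av F d) A * (z * val (av F d) L)) this
  simpa only [mul_assoc, zero_mul, mul_zero] using t2

lemma main (k : ℕ) : ∀ (X : List (Fin d)) (L : List (Atom d)),
    X.Nodup → X.length = 2 * k → (∀ i ∈ X, L.count (.lt (i, false)) = 3) →
    4 ≤ k + L.countP Atom.isBr → val (av F d) L = 0 := by
  induction k with
  | zero => intro X L _ _ _ h; exact base L (by omega)
  | succ k ih =>
    intro X L hX hlen hc hb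
    match X, hX, hlen, hc with
    | [], _, hlen, _ => simp at hlen
    | [_], _, hlen, _ => simp at hlen; omega
    | x :: y :: X, hX, hlen, hc =>
      simp only [List.nodup_cons, List.mem_cons, not_or] at hX
      obtain ⟨⟨hxy, hxX⟩, hyX, hX⟩ := hX
      refine collect three_Q engel (av F d) (.lt (x, false)) (.lt (y, false))
        (by simpa using hxy) L (hc x (by simp)) (hc y (by simp)) ?_ ?_ ?_
      · exact cube (Submodule.subset_span ⟨[(x, false)], by simp, by simp [wordOf]⟩)
      · exact cube (Submodule.subset_span ⟨[(y, false)], by simp, by simp [wordOf]⟩)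
      intro A B hp
      -- the bars of A ++ B
      have hbar : (A ++ B).countP Atom.isBr = L.countP Atom.isBr := by
        rw [hp.countP_eq, List.countP_filter]
        apply List.countP_congr
        intro c _
        cases c <;> simp
      have hcnt : ∀ i ∈ X, (A ++ B).count (.lt (i, false)) = 3 := by
        intro i hi
        have h1 : i ≠ x := fun h => hxX (h ▸ hi)
        have h2 : i ≠ y := fun h => hyX (h ▸ hi)
        rw [hp.count_eq, List.count_filter (by simp [h1, h2])]
        exact hc i (by simp [hi])
      have hx' : ∀ i ∈ X, x ≠ i := fun i hi h => hxX (h ▸ hi)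
      have hy' : ∀ i ∈ X, y ≠ i := fun i hi h => hyX (h ▸ hi)
      have len : X.length = 2 * k := by simp at hlen; omega
      rw [List.countP_append] at hbar
      have a1 := ih X ([.lt (x, false), .lt (x, false), .lt (y, false), .lt (y, false)] ++ A
        ++ [.br [(x, false), (y, false)]] ++ B) hX len
        (by intro i hi
            have := hcnt i hi
            rw [List.count_append] at this
            simp [List.count_cons, hx' i hi, hy' i hi]
            omega)
        (by simp [List.countP_cons]; omega)
      have a2 := ih X ([.lt (x, false), .lt (x, false), .lt (y, false), .lt (y, false)] ++ A
        ++ [.br [(y, false)], .lt (x, true)] ++ B) hX len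
        (by intro i hi
            have := hcnt i hi
            rw [List.count_append] at this
            simp [List.count_cons, hx' i hi, hy' i hi]
            omega)
        (by simp [List.countP_cons]; omega)
      have a3 := ih X ([.lt (x, false), .lt (x, false), .lt (y, false), .lt (y, false)] ++ A
        ++ [.lt (y, false), .br [(x, false)]] ++ B) hX len
        (by intro i hi
            have := hcnt i hi
            rw [List.count_append] at this
            simp [List.count_cons, hx' i hi, hy' i hi]
            omega)
        (by simp [List.countP_cons]; omega)
      simp only [val_append, val_cons, val_nil, av, mul_one] at a1 a2 a3 ⊢
      simp only [wordOf, List.map_cons, List.map_nil, List.prod_cons, List.prod_nil, mul_one,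
        bar, tp_mul, tp_ι, map_sub, map_mul, Bool.not_false] at a1 a2 a3
      set x0 := pr F d (FreeAlgebra.ι F (x, false))
      set y0 := pr F d (FreeAlgebra.ι F (y, false))
      set x1 := pr F d (FreeAlgebra.ι F (x, true))
      set y1 := pr F d (FreeAlgebra.ι F (y, true))
      set VA := val (av F d) A
      set VB := val (av F d) B
      have e : x0 ^ 2 * (y0 ^ 2 * (VA * (x0 * y0 - y0 * x0) * VB))
        = x0 * (x0 * (y0 * y0)) * VA * (x0 * y0 - y1 * x1) * VB
          - x0 * (x0 * (y0 * y0)) * VA * ((y0 - y1) * x1) * VB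
          - x0 * (x0 * (y0 * y0)) * VA * (y0 * (x0 - x1)) * VB := by noncomm_ring
      rw [e, a1, a2, a3]; simp

end quot
end Eng

/-- let `char F = 3`, `0 ≤ s ≤ 4`, let `x_{idx 1}, …, x_{idx (8-2s)}` be pairwise
different letters, `a₁, …, a_s ∈ M`, `u₁, …, u_{s+1} ∈ M₁` with `deg_{x_{idx i}}(u₁ ⋯ u_{s+1}) = 3`
for all `i`.  Then `u₁ ā₁ u₂ ā₂ ⋯ u_s ā_s u_{s+1} = 0` in `A_{3,d}`. -/
theorem stmt11 (F : Type) [Field F] [Infinite F] [CharP F 3] (d : ℕ) (s : ℕ) (hs : s ≤ 4)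
    (idx : Fin (8 - 2 * s) → Fin d) (hidx : Function.Injective idx)
    (a : Fin s → List (Ltr d)) (ha : ∀ i, a i ≠ [])
    (u : Fin (s + 1) → List (Ltr d))
    (hdeg : ∀ i : Fin (8 - 2 * s),
      (∑ j : Fin (s + 1), (u j).count ((idx i, false) : Ltr d)) = 3) :
    wordOf F d (u 0) *
      (List.ofFn fun i : Fin s => bar F d (wordOf F d (a i)) * wordOf F d (u i.succ)).prod
      ∈ idealA F d := by
  rw [← Eng.pr_zero]
  set X : List (Fin d) := List.ofFn idx with hX
  set L : List (Eng.Atom d) := (u 0).map Eng.Atom.lt ++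
    (List.ofFn fun i : Fin s => Eng.Atom.br (a i) :: (u i.succ).map Eng.Atom.lt).flatten with hL
  have hw : ∀ l : List (Ltr d), Eng.val (Eng.av F d) (l.map Eng.Atom.lt) = Eng.pr F d (wordOf F d l) := by
    intro l
    induction l with
    | nil => simp [wordOf]
    | cons c l ih => simp [ih, wordOf, Eng.av]
  have hval : Eng.val (Eng.av F d) L = Eng.pr F d (wordOf F d (u 0) *
      (List.ofFn fun i : Fin s => bar F d (wordOf F d (a i)) * wordOf F d (u i.succ)).prod) := by
    rw [hL, Eng.val_append, hw, map_mul, map_list_prod]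
    congr 1
    have hf : ∀ M : List (List (Eng.Atom d)),
        Eng.val (Eng.av F d) M.flatten = (M.map (Eng.val (Eng.av F d))).prod := by
      intro M
      induction M with
      | nil => simp
      | cons c M ih => simp [ih]
    rw [hf, List.map_ofFn, List.map_ofFn]
    congr 2
    funext i
    simp [hw, Eng.av]
  rw [← hval]
  have hcnt : ∀ c : Ltr d, L.count (Eng.Atom.lt c) = ∑ j : Fin (s + 1), (u j).count c := by
    intro c
    have hi : ∀ l : List (Ltr d),
        (l.map (Eng.Atom.lt : Ltr d → Eng.Atom d)).count (Eng.Atom.lt c) = l.count c := by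
      intro l
      exact List.count_map_of_injective l _ (fun _ _ h => by simpa using h) c
    rw [hL, List.count_append, hi, List.count_flatten, List.map_ofFn, List.sum_ofFn,
      Fin.sum_univ_succ]
    congr 1
    refine Finset.sum_congr rfl fun i _ => ?_
    simp [List.count_cons, hi]
  have hbar : L.countP Eng.Atom.isBr = s := by
    have hi : ∀ l : List (Ltr d),
        (l.map (Eng.Atom.lt : Ltr d → Eng.Atom d)).countP Eng.Atom.isBr = 0 := by
      intro l
      induction l <;> simp_all
    rw [hL, List.countP_append, hi, List.countP_flatten, List.map_ofFn, List.sum_ofFn]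
    simp [List.countP_cons, hi]
  refine Eng.main (4 - s) X L (List.nodup_ofFn.mpr hidx) (by simp [hX]; omega) ?_ (by omega)
  intro i hi
  obtain ⟨j, rfl⟩ := (List.mem_ofFn' idx i).mp hi
  rw [hcnt]
  exact hdeg j
end
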